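/- arXiv:1803.03030 — 2 statements merged into one kernel-verified Lean document; each statement's English description precedes it below -/
import Mathlib

section
/- Let x ∈ R^n with S = supp(Ωx), |S| = s, 1 ≤ s ≤ n−2, and let g ~ N(0, I_n). Then for every t ≥ 0, E[dist²(g, t·Ωᵀ∂‖·‖₁(Ωx))] ≤ n − (4t/√π)(n−1−s) + t²(4s − 2 + (8/3)(n−1−s) − 2/3). -/
open MeasureTheory ProbabilityTheory Real

attribute [local instance] Classical.propDecidable

noncomputable abbrev gm (n : ℕ) : Measure (Fin n → ℝ) := Measure.pi fun _ => gaussianReal 0 1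

lemma meas_sign : Measurable Real.sign := by
  unfold Real.sign
  exact Measurable.ite (measurableSet_lt measurable_id measurable_const) measurable_const
    (Measurable.ite (measurableSet_lt measurable_const measurable_id) measurable_const
      measurable_const)

lemma abs_sign_le (r : ℝ) : |Real.sign r| ≤ 1 := by
  rcases Real.sign_apply_eq r with h | h | h <;> simp [h]

lemma sign_mul_self' (r : ℝ) : Real.sign r * r = |r| := by
  rcases lt_trichotomy r 0 with h | h | h
  · rw [Real.sign_of_neg h, abs_of_neg h]; ring
  · simp [h]
  · rw [Real.sign_of_pos h, abs_of_pos h]; ring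

lemma sign_triple (a b c : ℝ) : -1 ≤ Real.sign (a - b) * Real.sign (b - c) +
    Real.sign (b - c) * Real.sign (c - a) + Real.sign (c - a) * Real.sign (a - b) := by
  unfold Real.sign
  split_ifs <;> linarith

lemma gm_integrable_eval_sq {n : ℕ} (i : Fin n) :
    Integrable (fun g : Fin n → ℝ => g i ^ 2) (gm n) := by
  have h := (measurePreserving_eval (fun _ : Fin n => gaussianReal 0 1) i)
  have h2 : Integrable (fun x : ℝ => x ^ 2) (gaussianReal 0 1) :=
    (memLp_id_gaussianReal 2).integrable_sq
  exact h.integrable_comp_of_integrable h2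

lemma gm_integrable_eval {n : ℕ} (i : Fin n) :
    Integrable (fun g : Fin n → ℝ => g i) (gm n) := by
  have h := (measurePreserving_eval (fun _ : Fin n => gaussianReal 0 1) i)
  have h2 : Integrable (fun x : ℝ => x) (gaussianReal 0 1) :=
    memLp_one_iff_integrable.1 (memLp_id_gaussianReal 1)
  exact h.integrable_comp_of_integrable h2

lemma gm_integral_eval {n : ℕ} (i : Fin n) :
    ∫ g : Fin n → ℝ, g i ∂(gm n) = 0 := by
  have h := (measurePreserving_eval (fun _ : Fin n => gaussianReal 0 1) i)
  have h2 : ∫ x : ℝ, x ∂(gaussianReal 0 1) = 0 := integral_id_gaussianReal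
  rw [← h.map_eq, integral_map (h.measurable.aemeasurable) (by fun_prop)] at h2
  exact h2

lemma gm_integral_eval_sq {n : ℕ} (i : Fin n) :
    ∫ g : Fin n → ℝ, g i ^ 2 ∂(gm n) = 1 := by
  have h := (measurePreserving_eval (fun _ : Fin n => gaussianReal 0 1) i)
  have h2 : ∫ x : ℝ, x ^ 2 ∂(gaussianReal 0 1) = 1 := by
    have := variance_id_gaussianReal (μ := 0) (v := 1)
    rw [variance_of_integral_eq_zero aemeasurable_id (by simp)] at this
    simpa using this
  rw [← h.map_eq, integral_map (h.measurable.aemeasurable) (by fun_prop)] at h2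
  exact h2

lemma gauss_abs : ∫ x : ℝ, |x| ∂(gaussianReal 0 2) = 2 / Real.sqrt π := by
  rw [integral_gaussianReal_eq_integral_smul (by norm_num)]
  simp only [gaussianPDFReal, smul_eq_mul]
  have h1 := integral_comp_abs (f := fun x : ℝ =>
    (√(2 * π * (2:NNReal)))⁻¹ * rexp (-(x - 0) ^ 2 / (2 * (2:NNReal))) * x)
  simp only [sub_zero, sq_abs] at h1 ⊢
  rw [h1]
  have h2 := integral_rpow_mul_exp_neg_mul_rpow (p := 2) (q := 1) (b := 1/4) (by norm_num)
    (by norm_num) (by norm_num)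
  have h3 : ∀ x : ℝ, (√(2 * π * (2:NNReal)))⁻¹ * rexp (-x ^ 2 / (2 * (2:NNReal))) * x
      = (√(2 * π * (2:NNReal)))⁻¹ * (x ^ (1:ℝ) * rexp (-(1/4) * x ^ (2:ℝ))) := by
    intro x
    rw [Real.rpow_one, Real.rpow_two, mul_assoc, mul_comm x]
    congr 3
    push_cast
    ring
  simp_rw [h3]
  rw [integral_const_mul, h2]
  have h4 : (2 * π * ((2:NNReal):ℝ)) = 2 ^ 2 * π := by push_cast; ring
  rw [h4, Real.sqrt_mul (by norm_num), Real.sqrt_sq (by norm_num)]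
  norm_num
  have : 0 < √π := Real.sqrt_pos.2 Real.pi_pos
  field_simp

lemma gm_law_sub {n : ℕ} {i j : Fin n} (hij : i ≠ j) :
    (gm n).map (fun g => g i - g j) = gaussianReal 0 2 := by
  have hI := iIndepFun_pi (μ := fun _ : Fin n => gaussianReal 0 1) (X := fun _ => id)
    (fun _ => aemeasurable_id)
  have hI2 := (hI.indepFun hij).comp (φ := id) (ψ := fun x => -x) measurable_id measurable_neg
  have hi := (measurePreserving_eval (fun _ : Fin n => gaussianReal 0 1) i).map_eq
  have hj := (measurePreserving_eval (fun _ : Fin n => gaussianReal 0 1) j).map_eq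
  have hj' : (gm n).map (fun g => - g j) = gaussianReal 0 1 := by
    have := gaussianReal_map_neg (μ := 0) (v := 1)
    rw [← hj, Measure.map_map (by fun_prop) (by fun_prop)] at this
    simpa [Function.comp_def, hj] using this
  have := gaussianReal_add_gaussianReal_of_indepFun hI2 hi hj'
  rw [zero_add, one_add_one_eq_two] at this
  rw [← this]
  congr 1

lemma gm_integral_abs {n : ℕ} {i j : Fin n} (hij : i ≠ j) :
    ∫ g : Fin n → ℝ, |g i - g j| ∂(gm n) = 2 / Real.sqrt π := by
  rw [← gauss_abs, ← gm_law_sub hij, integral_map (by fun_prop) (by fun_prop)]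

lemma gm_perm {n : ℕ} (e : Equiv.Perm (Fin n)) (f : (Fin n → ℝ) → ℝ) :
    ∫ g, f (fun i => g (e.symm i)) ∂(gm n) = ∫ g, f g ∂(gm n) := by
  have h := measurePreserving_piCongrLeft (α := fun _ => ℝ)
    (fun _ : Fin n => gaussianReal 0 1) e
  have h2 := h.integral_comp' (g := f)
  rw [← h2]
  refine integral_congr_ae (Filter.Eventually.of_forall fun g => ?_)
  refine congrArg f (funext fun i => ?_)
  obtain ⟨k, rfl⟩ := e.surjective i
  rw [MeasurableEquiv.coe_piCongrLeft, Equiv.piCongrLeft_apply_apply, Equiv.symm_apply_apply]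

lemma gm_int_sign {n : ℕ} (i j : Fin n) :
    Integrable (fun g : Fin n → ℝ => Real.sign (g i - g j)) (gm n) :=
  Integrable.of_bound (C := 1) (meas_sign.comp (by fun_prop)).aestronglyMeasurable
    (Filter.Eventually.of_forall fun g => by simpa using abs_sign_le _)

lemma gm_int_sign2 {n : ℕ} (i j k l : Fin n) :
    Integrable (fun g : Fin n → ℝ => Real.sign (g i - g j) * Real.sign (g k - g l)) (gm n) :=
  Integrable.of_bound (C := 1) ((meas_sign.comp (by fun_prop)).mul
    (meas_sign.comp (by fun_prop))).aestronglyMeasurable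
    (Filter.Eventually.of_forall fun g => by
      rw [norm_mul]
      exact mul_le_one₀ (abs_sign_le _) (norm_nonneg _) (abs_sign_le _))

lemma gm_sign {n : ℕ} (i j : Fin n) :
    ∫ g : Fin n → ℝ, Real.sign (g i - g j) ∂(gm n) = 0 := by
  have h := gm_perm (Equiv.swap i j) (fun g => Real.sign (g i - g j))
  simp only [Equiv.symm_swap, Equiv.swap_apply_left, Equiv.swap_apply_right] at h
  have h2 : ∀ g : Fin n → ℝ, Real.sign (g j - g i) = - Real.sign (g i - g j) := by
    intro g
    rw [← Real.sign_neg]; congr 1; ring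
  simp_rw [h2] at h
  rw [integral_neg] at h
  linarith

lemma gm_sign2 {n : ℕ} {i j k : Fin n} (hij : i ≠ j) (hjk : j ≠ k) (hik : i ≠ k) :
    -(1/3) ≤ ∫ g : Fin n → ℝ, Real.sign (g i - g j) * Real.sign (g j - g k) ∂(gm n) := by
  obtain ⟨e, h1, h2, h3⟩ : ∃ e : Equiv.Perm (Fin n), e i = j ∧ e j = k ∧ e k = i := by
    refine ⟨Equiv.swap i j * Equiv.swap j k, ?_, ?_, ?_⟩
    · simp [Equiv.swap_apply_of_ne_of_ne hij hik]
    · simp [Equiv.swap_apply_of_ne_of_ne hik.symm hjk.symm]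
    · simp
  have ha := gm_perm e.symm (fun g => Real.sign (g i - g j) * Real.sign (g j - g k))
  have hb := gm_perm e.symm (fun g => Real.sign (g j - g k) * Real.sign (g k - g i))
  simp only [Equiv.symm_symm, h1, h2, h3] at ha hb
  have h : ∫ g : Fin n → ℝ, (-1 : ℝ) ∂(gm n) ≤
      ∫ g : Fin n → ℝ, (Real.sign (g i - g j) * Real.sign (g j - g k) +
    Real.sign (g j - g k) * Real.sign (g k - g i) + Real.sign (g k - g i) * Real.sign (g i - g j))
      ∂(gm n) :=
    integral_mono (integrable_const _)
      (((gm_int_sign2 i j j k).add (gm_int_sign2 j k k i)).add (gm_int_sign2 k i i j))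
      (fun g => sign_triple _ _ _)
  rw [integral_add (by exact (gm_int_sign2 i j j k).add (gm_int_sign2 j k k i))
    (gm_int_sign2 k i i j), integral_add (gm_int_sign2 i j j k) (gm_int_sign2 j k k i)] at h
  simp at h
  linarith

lemma pairs_le (a : ℕ → ℝ) (ha : ∀ i, a i = 0 ∨ a i = 1) (M : ℕ)
    (h : 1 ≤ ∑ i ∈ Finset.range (M + 1), a i) :
    ∑ i ∈ Finset.range M, a i * a (i + 1) ≤ ∑ i ∈ Finset.range (M + 1), a i - 1 := by
  have key : ∀ M : ℕ,
      ((∑ i ∈ Finset.range (M + 1), a i = 0 ∧ a M = 0 ∧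
        ∑ i ∈ Finset.range M, a i * a (i + 1) = 0) ∨
      ∑ i ∈ Finset.range M, a i * a (i + 1) ≤ ∑ i ∈ Finset.range (M + 1), a i - 1) := by
    intro M
    induction M with
    | zero => rcases ha 0 with h0 | h0 <;> simp [h0]
    | succ k ih =>
      rw [Finset.sum_range_succ (fun i => a i) (k + 1),
        Finset.sum_range_succ (fun i => a i * a (i + 1)) k]
      rcases ih with ⟨h1, h2, h3⟩ | h1
      · rcases ha (k + 1) with h0 | h0
        · left; simp [h0, h1, h3]
        · right; simp [h0, h1, h2, h3]
      · right
        rcases ha (k + 1) with h0 | h0 <;> rcases ha k with h4 | h4 <;> rw [h0, h4] <;> linarith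
  rcases key M with h1 | h1
  · linarith [h1.1]
  · exact h1

lemma inner_zero (M : ℕ) (z : ℕ → ℝ) (ω : ℕ → ℕ → ℝ)
    (hω : ∀ i l, ω i l = if l = i then 1 else if l = i + 1 then -1 else 0) :
    ∑ i ∈ Finset.range (M + 1), z i * ω i 0 = z 0 := by
  rw [Finset.sum_eq_single 0]
  · simp [hω]
  · intro b _ hb
    simp [hω, hb.symm]
  · simp

lemma inner_succ (N k : ℕ) (z : ℕ → ℝ) (ω : ℕ → ℕ → ℝ)
    (hω : ∀ i l, ω i l = if l = i then 1 else if l = i + 1 then -1 else 0) :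
    ∑ i ∈ Finset.range N, z i * ω i (k + 1) =
      (if k + 1 < N then z (k + 1) else 0) - (if k < N then z k else 0) := by
  have h : ∀ i, z i * ω i (k + 1) = (if k + 1 = i then z i else 0) - (if k = i then z i else 0) := by
    intro i
    rw [hω]
    split_ifs <;> first | omega | simp
  simp_rw [h]
  rw [Finset.sum_sub_distrib, Finset.sum_ite_eq, Finset.sum_ite_eq]
  simp

lemma expand_aux (G z : ℕ → ℝ) (t : ℝ) (M : ℕ) :
    ∑ k ∈ Finset.range M, (G (k + 1) - t * (z (k + 1) - z k)) ^ 2 + (G (M + 1) + t * z M) ^ 2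
      + (G 0 - t * z 0) ^ 2 =
    ∑ l ∈ Finset.range (M + 2), G l ^ 2
      - 2 * t * ∑ i ∈ Finset.range (M + 1), z i * (G i - G (i + 1))
      + t ^ 2 * (2 * ∑ i ∈ Finset.range (M + 1), z i ^ 2
        - 2 * ∑ i ∈ Finset.range M, z i * z (i + 1)) := by
  induction M with
  | zero => simp [Finset.sum_range_succ]; ring
  | succ k ih =>
    rw [Finset.sum_range_succ _ k, Finset.sum_range_succ (fun i => G i ^ 2) (k + 2),
      Finset.sum_range_succ (fun i => z i * (G i - G (i + 1))) (k + 1),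
      Finset.sum_range_succ (fun i => z i ^ 2) (k + 1), Finset.sum_range_succ (fun i => z i * z (i + 1)) k]
    linarith

lemma expand (G z : ℕ → ℝ) (t : ℝ) (M : ℕ) (ω : ℕ → ℕ → ℝ)
    (hω : ∀ i l, ω i l = if l = i then 1 else if l = i + 1 then -1 else 0) :
    ∑ l ∈ Finset.range (M + 2), (G l - t * ∑ i ∈ Finset.range (M + 1), z i * ω i l) ^ 2 =
    ∑ l ∈ Finset.range (M + 2), G l ^ 2
      - 2 * t * ∑ i ∈ Finset.range (M + 1), z i * (G i - G (i + 1))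
      + t ^ 2 * (2 * ∑ i ∈ Finset.range (M + 1), z i ^ 2
        - 2 * ∑ i ∈ Finset.range M, z i * z (i + 1)) := by
  rw [← expand_aux, Finset.sum_range_succ', Finset.sum_range_succ, inner_zero M z ω hω,
    inner_succ (M + 1) M z ω hω]
  congr 2
  · refine Finset.sum_congr rfl fun k hk => ?_
    have hk' := Finset.mem_range.1 hk
    rw [inner_succ (M + 1) k z ω hω, if_pos (by omega), if_pos (by omega)]
  · simp

lemma main_bound (M s : ℕ) (x : ℕ → ℝ) (t : ℝ) (ht : 0 ≤ t)
    (ω : ℕ → ℕ → ℝ)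
    (hω : ∀ i l, ω i l = if l = i then 1 else if l = i + 1 then -1 else 0)
    (hcard : ((Finset.range (M + 1)).filter (fun i => x i - x (i + 1) ≠ 0)).card = s)
    (hs1 : 1 ≤ s) (hs2 : s ≤ M) :
    (∫ g : Fin (M + 2) → ℝ,
        sInf {d : ℝ | ∃ z : ℕ → ℝ,
          (∀ i < M + 1,
            (x i - x (i + 1) ≠ 0 → z i = Real.sign (x i - x (i + 1))) ∧
            (x i - x (i + 1) = 0 → |z i| ≤ 1)) ∧
          d = ∑ l : Fin (M + 2),
            (g l - t * ∑ i ∈ Finset.range (M + 1), z i * ω i (l : ℕ)) ^ 2}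
        ∂(gm (M + 2)))
      ≤ ((M : ℝ) + 2) - (4 * t / Real.sqrt π) * ((M : ℝ) + 1 - s)
          + t ^ 2 * (4 * (s : ℝ) - 2 + (8 / 3) * ((M : ℝ) + 1 - s) - 2 / 3) := by
  let ix : ℕ → Fin (M + 2) := fun k => Fin.ofNat (M + 2) k
  have hix : ∀ i j, i < M + 2 → j < M + 2 → i ≠ j → ix i ≠ ix j := by
    intro i j hi hj hij h
    have := congrArg Fin.val h
    simp only [ix, Fin.ofNat, Nat.mod_eq_of_lt hi, Nat.mod_eq_of_lt hj] at this
    exact hij this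
  let z : (Fin (M + 2) → ℝ) → ℕ → ℝ := fun g i =>
    if x i - x (i + 1) ≠ 0 then Real.sign (x i - x (i + 1))
    else Real.sign (g (ix i) - g (ix (i + 1)))
  let a : ℕ → ℝ := fun i => if x i - x (i + 1) ≠ 0 then 1 else 0
  have hz1 : ∀ g i, |z g i| ≤ 1 := by
    intro g i
    simp only [z]
    split_ifs <;> exact abs_sign_le _
  have ha : ∀ i, a i = 0 ∨ a i = 1 := by
    intro i
    simp only [a]
    split_ifs <;> simp
  have hasum : ∑ i ∈ Finset.range (M + 1), a i = s := by
    rw [← hcard]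
    simp only [a]
    rw [Finset.sum_ite]
    simp
  -- first-order terms
  have h1 : ∀ i < M + 1, Integrable (fun g => z g i * (g (ix i) - g (ix (i + 1)))) (gm (M + 2)) ∧
      ∫ g, z g i * (g (ix i) - g (ix (i + 1))) ∂(gm (M + 2)) = (1 - a i) * (2 / √π) := by
    intro i hi
    have hD := (gm_integrable_eval (ix i)).sub (gm_integrable_eval (ix (i + 1)))
    by_cases hx : x i - x (i + 1) ≠ 0
    · simp only [z, a, if_pos hx]
      refine ⟨hD.const_mul _, ?_⟩
      rw [integral_const_mul, integral_sub (gm_integrable_eval _) (gm_integrable_eval _),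
        gm_integral_eval, gm_integral_eval]
      simp
    · simp only [z, a, if_neg hx, sign_mul_self']
      refine ⟨hD.abs, ?_⟩
      rw [gm_integral_abs (hix i (i + 1) (by omega) (by omega) (by omega))]
      simp
  -- second-order terms
  have h2 : ∀ i < M, Integrable (fun g => z g i * z g (i + 1)) (gm (M + 2)) ∧
      -(a i * a (i + 1)) - 1 / 3 * ((1 - a i) * (1 - a (i + 1))) ≤
      ∫ g, z g i * z g (i + 1) ∂(gm (M + 2)) := by
    intro i hi
    by_cases hx : x i - x (i + 1) ≠ 0 <;> by_cases hy : x (i + 1) - x (i + 1 + 1) ≠ 0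
    · simp only [z, a, if_pos hx, if_pos hy]
      refine ⟨integrable_const _, ?_⟩
      have hp : |Real.sign (x i - x (i + 1)) * Real.sign (x (i + 1) - x (i + 1 + 1))| ≤ 1 := by
        rw [abs_mul]
        exact mul_le_one₀ (abs_sign_le _) (abs_nonneg _) (abs_sign_le _)
      have := (abs_le.1 hp).1
      simp only [integral_const, probReal_univ, one_smul]
      linarith
    · simp only [z, a, if_pos hx, if_neg hy]
      refine ⟨(gm_int_sign _ _).const_mul _, ?_⟩
      rw [integral_const_mul, gm_sign]
      simp
    · simp only [z, a, if_neg hx, if_pos hy]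
      refine ⟨(gm_int_sign _ _).mul_const _, ?_⟩
      rw [integral_mul_const, gm_sign]
      simp
    · simp only [z, a, if_neg hx, if_neg hy]
      refine ⟨gm_int_sign2 _ _ _ _, ?_⟩
      have := gm_sign2 (hix i (i + 1) (by omega) (by omega) (by omega))
        (hix (i + 1) (i + 1 + 1) (by omega) (by omega) (by omega))
        (hix i (i + 1 + 1) (by omega) (by omega) (by omega))
      linarith
  let H : (Fin (M + 2) → ℝ) → ℝ := fun g =>
    ∑ l : Fin (M + 2), g l ^ 2
      - 2 * t * ∑ i ∈ Finset.range (M + 1), z g i * (g (ix i) - g (ix (i + 1)))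
      + t ^ 2 * (2 * (M + 1) - 2 * ∑ i ∈ Finset.range M, z g i * z g (i + 1))
  have hI1 : Integrable (fun g : Fin (M + 2) → ℝ => ∑ l : Fin (M + 2), g l ^ 2) (gm (M + 2)) :=
    integrable_finsetSum _ fun l _ => gm_integrable_eval_sq l
  have hI2 : Integrable (fun g : Fin (M + 2) → ℝ =>
      ∑ i ∈ Finset.range (M + 1), z g i * (g (ix i) - g (ix (i + 1)))) (gm (M + 2)) :=
    integrable_finsetSum _ fun i hi => (h1 i (Finset.mem_range.1 hi)).1
  have hI3 : Integrable (fun g : Fin (M + 2) → ℝ =>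
      ∑ i ∈ Finset.range M, z g i * z g (i + 1)) (gm (M + 2)) :=
    integrable_finsetSum _ fun i hi => (h2 i (Finset.mem_range.1 hi)).1
  have hI12 : Integrable (fun g : Fin (M + 2) → ℝ => ∑ l : Fin (M + 2), g l ^ 2
      - 2 * t * ∑ i ∈ Finset.range (M + 1), z g i * (g (ix i) - g (ix (i + 1)))) (gm (M + 2)) :=
    hI1.sub (hI2.const_mul _)
  have hI4 : Integrable (fun g : Fin (M + 2) → ℝ =>
      (2 * ((M : ℝ) + 1) - 2 * ∑ i ∈ Finset.range M, z g i * z g (i + 1))) (gm (M + 2)) :=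
    (integrable_const _).sub (hI3.const_mul _)
  have hIH : Integrable H (gm (M + 2)) := hI12.add (hI4.const_mul _)
  have hle : ∀ g : Fin (M + 2) → ℝ, sInf {d : ℝ | ∃ z : ℕ → ℝ,
          (∀ i < M + 1,
            (x i - x (i + 1) ≠ 0 → z i = Real.sign (x i - x (i + 1))) ∧
            (x i - x (i + 1) = 0 → |z i| ≤ 1)) ∧
          d = ∑ l : Fin (M + 2),
            (g l - t * ∑ i ∈ Finset.range (M + 1), z i * ω i (l : ℕ)) ^ 2} ≤ H g := by
    intro g
    refine le_trans (csInf_le (a := ∑ l : Fin (M + 2),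
      (g l - t * ∑ i ∈ Finset.range (M + 1), z g i * ω i (l : ℕ)) ^ 2) ⟨0, ?_⟩ ⟨z g, ?_, rfl⟩) ?_
    · rintro d ⟨z', _, rfl⟩
      exact Finset.sum_nonneg fun _ _ => sq_nonneg _
    · intro i _
      exact ⟨fun h => by simp only [z, if_pos h], fun _ => hz1 g i⟩
    · have hg : ∀ l : Fin (M + 2), g l = g (ix l) := by
        intro l
        congr 1
        simp [ix]
      have e1 : ∑ l : Fin (M + 2),
            (g l - t * ∑ i ∈ Finset.range (M + 1), z g i * ω i (l : ℕ)) ^ 2 =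
          ∑ l ∈ Finset.range (M + 2),
            (g (ix l) - t * ∑ i ∈ Finset.range (M + 1), z g i * ω i l) ^ 2 := by
        rw [← Fin.sum_univ_eq_sum_range (fun l => (g (ix l) - t * ∑ i ∈ Finset.range (M + 1), z g i * ω i l) ^ 2)]
        exact Finset.sum_congr rfl fun l _ => by rw [← hg l]
      have e2 : ∑ l : Fin (M + 2), g l ^ 2 = ∑ l ∈ Finset.range (M + 2), g (ix l) ^ 2 := by
        rw [← Fin.sum_univ_eq_sum_range (fun l => g (ix l) ^ 2)]
        exact Finset.sum_congr rfl fun l _ => by rw [← hg l]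
      rw [e1, expand (fun k => g (ix k)) (z g) t M ω hω]
      simp only [H]
      rw [e2]
      have e3 : ∑ i ∈ Finset.range (M + 1), z g i ^ 2 ≤ (M : ℝ) + 1 := by
        calc ∑ i ∈ Finset.range (M + 1), z g i ^ 2 ≤ ∑ i ∈ Finset.range (M + 1), (1 : ℝ) :=
              Finset.sum_le_sum fun i _ => (sq_le_one_iff_abs_le_one _).2 (hz1 g i)
          _ = (M : ℝ) + 1 := by simp
      gcongr
  refine (integral_mono_of_nonneg (Filter.Eventually.of_forall fun g => ?_) hIH
    (Filter.Eventually.of_forall hle)).trans ?_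
  · refine Real.sInf_nonneg ?_
    rintro d ⟨z', _, rfl⟩
    exact Finset.sum_nonneg fun _ _ => sq_nonneg _
  have hval : ∫ g, H g ∂(gm (M + 2)) = ((M : ℝ) + 2)
      - 2 * t * ∑ i ∈ Finset.range (M + 1), (1 - a i) * (2 / √π)
      + t ^ 2 * (2 * (M + 1) - 2 * ∑ i ∈ Finset.range M,
        ∫ g, z g i * z g (i + 1) ∂(gm (M + 2))) := by
    simp only [H]
    rw [integral_add hI12 (hI4.const_mul _), integral_sub hI1 (hI2.const_mul _),
      integral_const_mul, integral_const_mul, integral_sub (integrable_const _) (hI3.const_mul _),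
      integral_const_mul, integral_const_mul, integral_finsetSum _ fun l _ => gm_integrable_eval_sq l,
      integral_finsetSum _ fun i hi => (h1 i (Finset.mem_range.1 hi)).1,
      integral_finsetSum _ fun i hi => (h2 i (Finset.mem_range.1 hi)).1,
      Finset.sum_congr rfl fun i hi => (h1 i (Finset.mem_range.1 hi)).2]
    simp [gm_integral_eval_sq]
  rw [hval]
  have hb : ∑ i ∈ Finset.range (M + 1), (1 - a i) = (M : ℝ) + 1 - s := by
    rw [Finset.sum_sub_distrib, hasum]
    simp
  rw [← Finset.sum_mul, hb]
  have hs1' : (1 : ℝ) ≤ s := by exact_mod_cast hs1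
  have hs2' : (s : ℝ) ≤ M := by exact_mod_cast hs2
  have p1 := pairs_le a ha M (by rw [hasum]; exact hs1')
  have p2 := pairs_le (fun i => 1 - a i) (fun i => by rcases ha i with h | h <;> simp [h]) M
    (by rw [hb]; linarith)
  rw [hasum] at p1
  rw [hb] at p2
  have p3 := Finset.sum_le_sum fun i (hi : i ∈ Finset.range M) => (h2 i (Finset.mem_range.1 hi)).2
  rw [Finset.sum_sub_distrib, Finset.sum_neg_distrib, ← Finset.mul_sum] at p3
  have p4 : (2 * ((M : ℝ) + 1) - 2 * ∑ i ∈ Finset.range M,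
        ∫ g, z g i * z g (i + 1) ∂(gm (M + 2))) ≤
      4 * (s : ℝ) - 2 + (8 / 3) * ((M : ℝ) + 1 - s) - 2 / 3 := by linarith
  have p5 := mul_le_mul_of_nonneg_left p4 (sq_nonneg t)
  have p6 : 2 * t * (((M : ℝ) + 1 - s) * (2 / √π)) = 4 * t / √π * ((M : ℝ) + 1 - s) := by ring
  rw [p6]
  linarith

/-- For `x ∈ ℝⁿ` with gradient support of size `s`, `1 ≤ s ≤ n-2`, standard Gaussian
`g` and `t ≥ 0`, `E[dist²(g, t Ωᵀ ∂‖·‖₁(Ωx))] ≤ n - (4t/√π)(n-1-s) + t²(4s-2+(8/3)(n-1-s)-2/3)`.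
The squared distance is the infimum of `‖g - t Ωᵀ z‖₂²` over `z` in the ℓ¹ subdifferential
of `‖·‖₁` at `Ωx`, where `(Ωw)_i = w_i - w_{i+1}` and `Ωᵀz = Σ_i z_i ω_i`. -/
theorem stmt12 (n s : ℕ) (hn : 3 ≤ n) (x : ℕ → ℝ) (t : ℝ) (ht : 0 ≤ t)
    (ω : ℕ → ℕ → ℝ)
    (hω : ∀ i l, ω i l = if l = i then 1 else if l = i + 1 then -1 else 0)
    (hcard : ((Finset.range (n - 1)).filter (fun i => x i - x (i + 1) ≠ 0)).card = s)
    (hs1 : 1 ≤ s) (hs2 : s ≤ n - 2) :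
    (∫ g : Fin n → ℝ,
        sInf {d : ℝ | ∃ z : ℕ → ℝ,
          (∀ i < n - 1,
            (x i - x (i + 1) ≠ 0 → z i = Real.sign (x i - x (i + 1))) ∧
            (x i - x (i + 1) = 0 → |z i| ≤ 1)) ∧
          d = ∑ l : Fin n,
            (g l - t * ∑ i ∈ Finset.range (n - 1), z i * ω i (l : ℕ)) ^ 2}
        ∂(Measure.pi fun _ => gaussianReal 0 1))
      ≤ (n : ℝ) - (4 * t / Real.sqrt π) * ((n : ℝ) - 1 - s)
          + t ^ 2 * (4 * (s : ℝ) - 2 + (8 / 3) * ((n : ℝ) - 1 - s) - 2 / 3) := by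
  obtain ⟨M, rfl⟩ : ∃ M, n = M + 2 := ⟨n - 2, by omega⟩
  have h := main_bound M s x t ht ω hω hcard hs1 hs2
  have e : (((M + 2 : ℕ) : ℝ)) = (M : ℝ) + 2 := by push_cast; ring
  have e' : (((M + 2 : ℕ) : ℝ)) - 1 - s = (M : ℝ) + 1 - s := by push_cast; ring
  rw [e', e]
  exact h
end

section
/- Let x ∈ R^n with S = supp(Ωx), |S| = s, 1 ≤ s ≤ n−2, and g ~ N(0, I_n). Then inf_{t ≥ 0} E[dist²(g, t·∂‖·‖_TV(x))] ≤ n − 3(n−1−s)² / (π(2n + s − 4)). -/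
open MeasureTheory ProbabilityTheory Real

attribute [local instance] Classical.propDecidable

namespace TVaux

lemma measurable_rsign : Measurable Real.sign := by
  have : Real.sign = fun r : ℝ => if r < 0 then (-1:ℝ) else if 0 < r then 1 else 0 := by
    ext r; simp [Real.sign]
  rw [this]
  exact Measurable.ite measurableSet_Iio measurable_const
    (Measurable.ite measurableSet_Ioi measurable_const measurable_const)

lemma abs_rsign_le (r : ℝ) : |Real.sign r| ≤ 1 := by
  rcases Real.sign_apply_eq r with h | h | h <;> simp [h]

lemma rsign_mul_self (r : ℝ) : Real.sign r * r = |r| := by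
  rcases lt_trichotomy r 0 with h | h | h
  · simp [Real.sign_of_neg h, abs_of_neg h]
  · simp [h]
  · simp [Real.sign_of_pos h, abs_of_pos h]

lemma sign_cyc (a b c : ℝ) :
    -1 ≤ Real.sign (a - b) * Real.sign (b - c) + Real.sign (b - c) * Real.sign (c - a)
      + Real.sign (c - a) * Real.sign (a - b) := by
  simp only [Real.sign, sub_neg, sub_pos]
  split_ifs <;> first | (exfalso; linarith) | norm_num

lemma abs_gauss : ∫ x, |x| ∂(gaussianReal 0 2) = 2 / √π := by
  rw [integral_gaussianReal_eq_integral_smul (by norm_num)]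
  have h1 : ∀ x : ℝ, gaussianPDFReal 0 2 x • |x|
      = (fun y : ℝ => (√(4 * π))⁻¹ * (y ^ (1:ℝ) * rexp (-(1/4) * y ^ (2:ℝ)))) |x| := by
    intro x
    simp only [gaussianPDFReal, smul_eq_mul, Real.rpow_one, Real.rpow_two, sq_abs]
    push_cast
    rw [show (2 * π * 2 : ℝ) = 4 * π by ring, show -(x - 0)^2 / (2 * 2) = -(1/4 : ℝ) * x^2 by ring]
    ring
  simp_rw [h1]
  rw [integral_comp_abs (f := fun y : ℝ => (√(4 * π))⁻¹ * (y ^ (1:ℝ) * rexp (-(1/4) * y ^ (2:ℝ)))),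
    integral_const_mul, integral_rpow_mul_exp_neg_mul_rpow (by norm_num) (by norm_num) (by norm_num)]
  rw [show -((1:ℝ) + 1) / 2 = -1 by norm_num, Real.rpow_neg_one, show ((1:ℝ) + 1) / 2 = 1 by norm_num,
    Real.Gamma_one, Real.sqrt_mul (by norm_num), show √(4:ℝ) = 2 by
      rw [show (4:ℝ) = 2 ^ 2 by norm_num]; exact Real.sqrt_sq (by norm_num)]
  have : √π ≠ 0 := by positivity
  field_simp
  norm_num

noncomputable abbrev γ (n : ℕ) : Measure (Fin n → ℝ) := Measure.pi fun _ => gaussianReal 0 1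

lemma perm_int {n : ℕ} (σ : Equiv.Perm (Fin n)) (F : (Fin n → ℝ) → ℝ) :
    ∫ g, F (fun i => g (σ i)) ∂(γ n) = ∫ g, F g ∂(γ n) := by
  have h := measurePreserving_piCongrLeft (α := fun _ : Fin n => ℝ)
    (μ := fun _ : Fin n => gaussianReal 0 1) σ.symm
  have h2 := h.integral_comp' (g := F)
  rw [← h2]
  congr 1
  ext g
  congr 1
  ext i
  have := MeasurableEquiv.piCongrLeft_apply_apply (β := fun _ : Fin n => ℝ) σ.symm g (σ i)
  simpa using this.symm

lemma map_eval {n : ℕ} (i : Fin n) : (γ n).map (fun g => g i) = gaussianReal 0 1 :=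
  (measurePreserving_eval (fun _ : Fin n => gaussianReal 0 1) i).map_eq

lemma memLp_coord {n : ℕ} (i : Fin n) : MemLp (fun g : Fin n → ℝ => g i) 2 (γ n) := by
  have := (memLp_id_gaussianReal (μ := 0) (v := 1) 2)
  exact this.comp_measurePreserving (measurePreserving_eval (fun _ : Fin n => gaussianReal 0 1) i)

lemma int_coord {n : ℕ} (i : Fin n) : Integrable (fun g : Fin n → ℝ => g i) (γ n) :=
  (memLp_coord i).integrable (by norm_num)

lemma int_coord_sq {n : ℕ} (i : Fin n) : Integrable (fun g : Fin n → ℝ => g i ^ 2) (γ n) :=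
  (memLp_coord i).integrable_sq

lemma E_sq {n : ℕ} (i : Fin n) : ∫ g, g i ^ 2 ∂(γ n) = 1 := by
  have h : ∫ y, y ^ 2 ∂((γ n).map (fun g => g i)) = ∫ g, g i ^ 2 ∂(γ n) :=
    integral_map (measurable_pi_apply i).aemeasurable (by fun_prop)
  rw [← h, map_eval]
  have h3 := variance_fun_id_gaussianReal (μ := 0) (v := 1)
  rw [variance_of_integral_eq_zero (by fun_prop) (by simp)] at h3
  simpa using h3

lemma E_anti {n : ℕ} (i j : Fin n) (f : ℝ → ℝ) (hf : ∀ r, f (-r) = - f r) :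
    ∫ g, f (g i - g j) ∂(γ n) = 0 := by
  have h := perm_int (Equiv.swap i j) (fun g => f (g i - g j))
  simp only [Equiv.swap_apply_left, Equiv.swap_apply_right] at h
  have : ∀ g : Fin n → ℝ, f (g j - g i) = - f (g i - g j) := fun g => by
    rw [← hf, neg_sub]
  simp_rw [this, integral_neg] at h
  linarith

lemma E_abs {n : ℕ} (i j : Fin n) (hij : i ≠ j) : ∫ g, |g i - g j| ∂(γ n) = 2 / √π := by
  have hind : IndepFun (fun g : Fin n → ℝ => g i) (fun g => - g j) (γ n) := by
    have := (iIndepFun_pi (μ := fun _ : Fin n => gaussianReal 0 1) (X := fun _ => (id : ℝ → ℝ))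
      (fun _ => aemeasurable_id)).indepFun hij
    exact this.comp measurable_id measurable_neg
  have hneg : (γ n).map (fun g => - g j) = gaussianReal 0 1 := by
    have h := gaussianReal_map_neg (μ := 0) (v := 1)
    rw [← map_eval j, Measure.map_map (by fun_prop) (by fun_prop), neg_zero, ] at h
    exact (by simpa [map_eval, Function.comp_def] using h)
  have h := gaussianReal_add_gaussianReal_of_indepFun hind (map_eval i) hneg
  have h2 : ∫ y, |y| ∂((γ n).map ((fun g => g i) + fun g => - g j)) = ∫ g, |g i - g j| ∂(γ n) := by
    rw [integral_map (by fun_prop) (by fun_prop)]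
    simp [sub_eq_add_neg]
  rw [← h2, h, ← abs_gauss]
  norm_num

lemma int_bdd {n : ℕ} {F : (Fin n → ℝ) → ℝ} (hF : Measurable F) (hb : ∀ g, |F g| ≤ 1) :
    Integrable F (γ n) :=
  Integrable.of_bound hF.aestronglyMeasurable 1 (Filter.Eventually.of_forall hb)

lemma meas_sign {n : ℕ} (i j : Fin n) : Measurable fun g : Fin n → ℝ => Real.sign (g i - g j) :=
  measurable_rsign.comp (by fun_prop)

lemma abs_mul_le {a b : ℝ} (ha : |a| ≤ 1) (hb : |b| ≤ 1) : |a * b| ≤ 1 := by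
  rw [abs_mul]; exact mul_le_one₀ ha (abs_nonneg _) hb

lemma int_sign2 {n : ℕ} (i j k l : Fin n) :
    Integrable (fun g : Fin n → ℝ => Real.sign (g i - g j) * Real.sign (g k - g l)) (γ n) :=
  int_bdd ((meas_sign i j).mul (meas_sign k l))
    fun _ => abs_mul_le (abs_rsign_le _) (abs_rsign_le _)

lemma E_sign2 {n : ℕ} (i j k : Fin n) (hij : i ≠ j) (hjk : j ≠ k) (hik : i ≠ k) :
    -(1/3) ≤ ∫ g, Real.sign (g i - g j) * Real.sign (g j - g k) ∂(γ n) := by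
  set σ : Equiv.Perm (Fin n) := Equiv.swap i j * Equiv.swap j k with hσ
  have s1 : σ i = j := by
    simp [hσ, Equiv.swap_apply_of_ne_of_ne hij hik]
  have s2 : σ j = k := by
    simp [hσ, Equiv.swap_apply_of_ne_of_ne hik.symm hjk.symm]
  have s3 : σ k = i := by simp [hσ]
  have h1 := perm_int σ (fun g => Real.sign (g i - g j) * Real.sign (g j - g k))
  have h2 := perm_int σ (fun g => Real.sign (g j - g k) * Real.sign (g k - g i))
  simp only [s1, s2, s3] at h1 h2
  have h3 : ∫ g, (-1:ℝ) ∂(γ n) ≤ ∫ g, (Real.sign (g i - g j) * Real.sign (g j - g k)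
      + Real.sign (g j - g k) * Real.sign (g k - g i)
      + Real.sign (g k - g i) * Real.sign (g i - g j)) ∂(γ n) :=
    integral_mono (integrable_const _)
      (((int_sign2 _ _ _ _).add (int_sign2 _ _ _ _)).add (int_sign2 _ _ _ _))
      fun g => sign_cyc _ _ _
  rw [integral_add (by exact (int_sign2 _ _ _ _).add (int_sign2 _ _ _ _)) (int_sign2 _ _ _ _),
    integral_add (int_sign2 _ _ _ _) (int_sign2 _ _ _ _)] at h3
  simp at h3
  linarith

/-- counting -/
lemma count (P : ℕ → Prop) [DecidablePred P] (k : ℕ) :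
    let s : ℕ := ((Finset.range (k+1)).filter P).card
    let Q : ℝ := ∑ i ∈ Finset.range k, (if P i then (if P (i+1) then (3:ℝ) else 0)
      else (if P (i+1) then 0 else 1))
    (s = 0 → Q ≤ k) ∧ (s = k + 1 → Q ≤ 3 * k) ∧ (0 < s → s < k + 1 → Q ≤ k + 2 * s - 3) ∧
      s ≤ k + 1 ∧ (P k → 0 < s) ∧ (¬ P k → s < k+1) := by
  induction k with
  | zero =>
    by_cases h : P 0 <;> simp [h, Finset.filter_singleton]
  | succ k ih =>
    simp only at ih ⊢
    rw [Finset.range_add_one (n := k+1), Finset.filter_insert, Finset.sum_range_succ]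
    set s := ((Finset.range (k+1)).filter P).card with hs
    set Q := ∑ i ∈ Finset.range k, (if P i then (if P (i+1) then (3:ℝ) else 0)
      else (if P (i+1) then 0 else 1))
    obtain ⟨h1, h2, h3, h4, h5, h6⟩ := ih
    have hc : (if P (k+1) then insert (k+1) ((Finset.range (k+1)).filter P)
        else (Finset.range (k+1)).filter P).card = if P (k+1) then s + 1 else s := by
      split_ifs
      · rw [Finset.card_insert_of_notMem (by simp)]
      · rfl
    rw [hc]
    have key : (s = 0 ∧ Q ≤ k ∧ ¬ P k) ∨ (s = k+1 ∧ Q ≤ 3 * k ∧ P k) ∨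
        (0 < s ∧ s < k+1 ∧ Q ≤ k + 2 * s - 3) := by
      rcases Nat.eq_zero_or_pos s with h | h
      · exact Or.inl ⟨h, h1 h, fun hp => by have := h5 hp; omega⟩
      · rcases h4.lt_or_eq with h' | h'
        · exact Or.inr (Or.inr ⟨h, h', h3 h h'⟩)
        · exact Or.inr (Or.inl ⟨h', h2 h', by by_contra hp; have := h6 hp; omega⟩)
    clear_value s Q
    rcases key with ⟨a, b, c⟩ | ⟨a, b, c⟩ | ⟨a, b, c⟩
    · subst a
      by_cases hp : P (k+1) <;> simp [hp, c] <;> (try push_cast) <;>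
        first | linarith | (intros; linarith)
    · subst a
      by_cases hp : P (k+1) <;> simp [hp, c] <;> (try push_cast) <;>
        first | linarith | (intros; linarith)
    · by_cases hp : P (k+1) <;> by_cases hp' : P k <;> simp only [hp, hp', if_true, if_false] <;>
        (refine ⟨fun h => ?_, fun h => ?_, fun h h' => ?_, by omega, by simp <;> omega, by simp <;> omega⟩) <;>
        (try (exfalso; omega)) <;> push_cast <;> linarith

/-- algebra -/
lemma adj (ω : ℕ → ℕ → ℝ)
    (hω : ∀ i l, ω i l = if l = i then 1 else if l = i + 1 then -1 else 0)
    (z G : ℕ → ℝ) (m : ℕ) :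
    ∑ l ∈ Finset.range (m+1), G l * ∑ i ∈ Finset.range m, z i * ω i l
      = ∑ i ∈ Finset.range m, z i * (G i - G (i+1)) := by
  simp_rw [Finset.mul_sum]
  rw [Finset.sum_comm]
  refine Finset.sum_congr rfl fun i hi => ?_
  have hi := Finset.mem_range.1 hi
  have h : ∀ l, G l * (z i * ω i l) = (if l = i then z i * G l else 0)
      + (if l = i+1 then - (z i * G l) else 0) := by
    intro l
    rw [hω]
    split_ifs <;> first | omega | ring
  simp_rw [h]
  rw [Finset.sum_add_distrib, Finset.sum_ite_eq', Finset.sum_ite_eq',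
    if_pos (Finset.mem_range.2 (by omega)), if_pos (Finset.mem_range.2 (by omega))]
  ring

lemma sqsum (ω : ℕ → ℕ → ℝ)
    (hω : ∀ i l, ω i l = if l = i then 1 else if l = i + 1 then -1 else 0)
    (z : ℕ → ℝ) (k : ℕ) :
    ∑ l ∈ Finset.range (k+2), (∑ i ∈ Finset.range (k+1), z i * ω i l)^2
      = 2 * ∑ i ∈ Finset.range (k+1), z i ^ 2 - 2 * ∑ i ∈ Finset.range k, z i * z (i+1) := by
  induction k with
  | zero => simp [Finset.sum_range_succ, hω]; ring
  | succ k ih =>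
    rw [Finset.sum_range_succ _ (k+2), Finset.sum_range_succ _ (k+1),
      Finset.sum_range_succ (fun i => z i ^ 2) (k+1), Finset.sum_range_succ (fun i => z i * z (i+1)) k]
    rw [Finset.sum_range_succ _ (k+1)] at ih
    have e1 : ∀ l ∈ Finset.range (k+1), (∑ i ∈ Finset.range (k+1+1), z i * ω i l)^2
        = (∑ i ∈ Finset.range (k+1), z i * ω i l)^2 := by
      intro l hl
      have hl := Finset.mem_range.1 hl
      rw [Finset.sum_range_succ _ (k+1), hω, if_neg (by omega), if_neg (by omega)]
      simp
    rw [Finset.sum_congr rfl e1]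
    have e0 : ∀ l, k < l → ∑ i ∈ Finset.range k, z i * ω i l = 0 := by
      intro l hl
      refine Finset.sum_eq_zero fun i hi => ?_
      have := Finset.mem_range.1 hi
      rw [hω, if_neg (by omega), if_neg (by omega), mul_zero]
    have e2 : ∑ i ∈ Finset.range (k+1), z i * ω i (k+1) = - z k := by
      rw [Finset.sum_range_succ, e0 _ (by omega), hω]; simp
    have e3 : ∑ i ∈ Finset.range (k+1+1), z i * ω i (k+1) = - z k + z (k+1) := by
      rw [Finset.sum_range_succ, e2, hω]; simp
    have e4 : ∑ i ∈ Finset.range (k+1+1), z i * ω i (k+2) = - z (k+1) := by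
      rw [Finset.sum_range_succ, Finset.sum_range_succ, e0 _ (by omega), hω, hω]; simp
    rw [e3, e4]
    rw [e2] at ih
    linear_combination ih

end TVaux

namespace TVaux

/-- the chosen dual vector -/
noncomputable def zz (k : ℕ) (x : ℕ → ℝ) (g : Fin (k+2) → ℝ) (i : ℕ) : ℝ :=
  if x i - x (i+1) ≠ 0 then Real.sign (x i - x (i+1))
  else Real.sign (g (Fin.ofNat (k+2) i) - g (Fin.ofNat (k+2) (i+1)))

lemma zz_pos {k : ℕ} {x : ℕ → ℝ} {i : ℕ} (h : x i - x (i+1) ≠ 0) (g : Fin (k+2) → ℝ) :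
    zz k x g i = Real.sign (x i - x (i+1)) := if_pos h

lemma zz_neg {k : ℕ} {x : ℕ → ℝ} {i : ℕ} (h : ¬ x i - x (i+1) ≠ 0) (g : Fin (k+2) → ℝ) :
    zz k x g i = Real.sign (g (Fin.ofNat (k+2) i) - g (Fin.ofNat (k+2) (i+1))) := if_neg h

lemma abs_zz (k : ℕ) (x : ℕ → ℝ) (g : Fin (k+2) → ℝ) (i : ℕ) : |zz k x g i| ≤ 1 := by
  unfold zz; split_ifs <;> exact abs_rsign_le _

lemma meas_zz (k : ℕ) (x : ℕ → ℝ) (i : ℕ) : Measurable fun g => zz k x g i := by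
  unfold zz
  split_ifs
  · exact measurable_const
  · exact meas_sign _ _

lemma ne_ofNat (k i j : ℕ) (hi : i < k+2) (hj : j < k+2) (h : i ≠ j) :
    Fin.ofNat (k+2) i ≠ Fin.ofNat (k+2) j := by
  intro h'
  have := congrArg Fin.val h'
  simp only [Fin.val_ofNat, Nat.mod_eq_of_lt hi, Nat.mod_eq_of_lt hj] at this
  exact h this

lemma E_corr (k : ℕ) (x : ℕ → ℝ) (i : ℕ) (hi : i < k) :
    -(1/3) * (if x i - x (i+1) ≠ 0 then (if x (i+1) - x (i+1+1) ≠ 0 then (3:ℝ) else 0)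
      else (if x (i+1) - x (i+1+1) ≠ 0 then 0 else 1))
      ≤ ∫ g, zz k x g i * zz k x g (i+1) ∂(γ (k+2)) := by
  by_cases h1 : x i - x (i+1) ≠ 0 <;> by_cases h2 : x (i+1) - x (i+1+1) ≠ 0
  · rw [if_pos h1, if_pos h2]
    simp_rw [zz_pos h1, zz_pos h2]
    have := abs_mul_le (abs_rsign_le (x i - x (i+1))) (abs_rsign_le (x (i+1) - x (i+1+1)))
    have := (abs_le.1 this).1
    simp only [integral_const, probReal_univ, one_smul]
    norm_num
    linarith
  · rw [if_pos h1, if_neg h2]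
    simp_rw [zz_pos h1, zz_neg h2]
    rw [integral_const_mul, E_anti _ _ _ (fun r => Real.sign_neg)]; simp
  · rw [if_neg h1, if_pos h2]
    simp_rw [zz_neg h1, zz_pos h2]
    rw [integral_mul_const, E_anti _ _ _ (fun r => Real.sign_neg)]; simp
  · rw [if_neg h1, if_neg h2]
    simp_rw [zz_neg h1, zz_neg h2]
    have := E_sign2 (Fin.ofNat (k+2) i) (Fin.ofNat (k+2) (i+1)) (Fin.ofNat (k+2) (i+1+1))
      (ne_ofNat _ _ _ (by omega) (by omega) (by omega))
      (ne_ofNat _ _ _ (by omega) (by omega) (by omega))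
      (ne_ofNat _ _ _ (by omega) (by omega) (by omega))
    linarith

lemma int_lin (k : ℕ) (x : ℕ → ℝ) (i : ℕ) : Integrable (fun g => zz k x g i *
    (g (Fin.ofNat (k+2) i) - g (Fin.ofNat (k+2) (i+1)))) (γ (k+2)) := by
  refine Integrable.bdd_mul (c := 1) ((int_coord _).sub (int_coord _))
    (meas_zz k x i).aestronglyMeasurable (Filter.Eventually.of_forall fun g => abs_zz k x g i)

lemma int_corr (k : ℕ) (x : ℕ → ℝ) (i : ℕ) :
    Integrable (fun g => zz k x g i * zz k x g (i+1)) (γ (k+2)) :=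
  int_bdd ((meas_zz k x i).mul (meas_zz k x (i+1)))
    fun g => abs_mul_le (abs_zz _ _ _ _) (abs_zz _ _ _ _)

lemma E_lin (k : ℕ) (x : ℕ → ℝ) (i : ℕ) (hi : i < k+1) :
    ∫ g, zz k x g i * (g (Fin.ofNat (k+2) i) - g (Fin.ofNat (k+2) (i+1))) ∂(γ (k+2))
      = if x i - x (i+1) ≠ 0 then 0 else 2 / √π := by
  by_cases h1 : x i - x (i+1) ≠ 0
  · rw [if_pos h1]
    simp_rw [zz_pos h1]
    rw [integral_const_mul, E_anti _ _ (fun r => r) (fun r => rfl)]; simp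
  · rw [if_neg h1]
    simp_rw [zz_neg h1, rsign_mul_self]
    exact E_abs _ _ (ne_ofNat _ _ _ (by omega) (by omega) (by omega))

lemma expand (ω : ℕ → ℕ → ℝ)
    (hω : ∀ i l, ω i l = if l = i then 1 else if l = i + 1 then -1 else 0)
    (k : ℕ) (t : ℝ) (z : ℕ → ℝ) (g : Fin (k+2) → ℝ) (hz : ∀ i, |z i| ≤ 1) :
    ∑ l : Fin (k+2), (g l - t * ∑ i ∈ Finset.range (k+1), z i * ω i (l : ℕ)) ^ 2
      ≤ (∑ l : Fin (k+2), g l ^ 2) - 2 * t * (∑ i ∈ Finset.range (k+1), z i *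
          (g (Fin.ofNat (k+2) i) - g (Fin.ofNat (k+2) (i+1))))
        + t ^ 2 * (2 * (k+1) - 2 * ∑ i ∈ Finset.range k, z i * z (i+1)) := by
  have hg : ∀ l : Fin (k+2), g l = g (Fin.ofNat (k+2) (l:ℕ)) := fun l => by
    congr 1; ext; simp [Nat.mod_eq_of_lt l.2]
  have h1 := adj ω hω z (fun i => g (Fin.ofNat (k+2) i)) (k+1)
  have h2 := sqsum ω hω z k
  rw [← Fin.sum_univ_eq_sum_range (fun l => g (Fin.ofNat (k+2) l) *
    ∑ i ∈ Finset.range (k+1), z i * ω i l)] at h1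
  rw [← Fin.sum_univ_eq_sum_range (fun l => (∑ i ∈ Finset.range (k+1), z i * ω i l)^2)] at h2
  have h3 : ∑ i ∈ Finset.range (k+1), z i ^ 2 ≤ k + 1 := by
    have : ∑ i ∈ Finset.range (k+1), z i ^ 2 ≤ ∑ i ∈ Finset.range (k+1), (1:ℝ) :=
      Finset.sum_le_sum fun i _ => (sq_le_one_iff_abs_le_one _).2 (hz i)
    simpa using this
  have h4 : ∑ l : Fin (k+2), (g l - t * ∑ i ∈ Finset.range (k+1), z i * ω i (l : ℕ)) ^ 2
      = (∑ l : Fin (k+2), g l ^ 2) - 2 * t * (∑ l : Fin (k+2), g (Fin.ofNat (k+2) (l:ℕ)) *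
        ∑ i ∈ Finset.range (k+1), z i * ω i l)
        + t ^ 2 * ∑ l : Fin (k+2), (∑ i ∈ Finset.range (k+1), z i * ω i l)^2 := by
    rw [Finset.mul_sum, Finset.mul_sum, ← Finset.sum_sub_distrib, ← Finset.sum_add_distrib]
    refine Finset.sum_congr rfl fun l _ => ?_
    rw [← hg]
    ring
  rw [h4, h1, h2]
  have := mul_le_mul_of_nonneg_left h3 (sq_nonneg t)
  nlinarith

lemma main (k s : ℕ) (x : ℕ → ℝ)
    (hcard : ((Finset.range (k+1)).filter (fun i => x i - x (i + 1) ≠ 0)).card = s)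
    (hs1 : 1 ≤ s) (hs2 : s ≤ k) (t : ℝ) :
    Integrable (fun g => (∑ l : Fin (k+2), g l ^ 2) - 2 * t * (∑ i ∈ Finset.range (k+1),
          zz k x g i * (g (Fin.ofNat (k+2) i) - g (Fin.ofNat (k+2) (i+1))))
        + t ^ 2 * (2 * (k+1) - 2 * ∑ i ∈ Finset.range k, zz k x g i * zz k x g (i+1))) (γ (k+2)) ∧
    ∫ g, ((∑ l : Fin (k+2), g l ^ 2) - 2 * t * (∑ i ∈ Finset.range (k+1),
          zz k x g i * (g (Fin.ofNat (k+2) i) - g (Fin.ofNat (k+2) (i+1))))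
        + t ^ 2 * (2 * (k+1) - 2 * ∑ i ∈ Finset.range k, zz k x g i * zz k x g (i+1))) ∂(γ (k+2))
      ≤ (k + 2) - 2 * t * ((k + 1 - s) * (2 / √π)) + t ^ 2 * (4 * (2 * k + s) / 3) := by
  have i1 : Integrable (fun g : Fin (k+2) → ℝ => ∑ l : Fin (k+2), g l ^ 2) (γ (k+2)) :=
    integrable_finsetSum _ fun l _ => int_coord_sq l
  have i2 : Integrable (fun g : Fin (k+2) → ℝ => ∑ i ∈ Finset.range (k+1),
          zz k x g i * (g (Fin.ofNat (k+2) i) - g (Fin.ofNat (k+2) (i+1)))) (γ (k+2)) :=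
    integrable_finsetSum _ fun l _ => int_lin k x l
  have i3 : Integrable (fun g : Fin (k+2) → ℝ => ∑ i ∈ Finset.range k,
      zz k x g i * zz k x g (i+1)) (γ (k+2)) :=
    integrable_finsetSum _ fun l _ => int_corr k x l
  have i4 := (i3.const_mul 2)
  have i5 : Integrable (fun g : Fin (k+2) → ℝ => (2 * ((k:ℝ)+1) - 2 * ∑ i ∈ Finset.range k,
      zz k x g i * zz k x g (i+1))) (γ (k+2)) := (integrable_const _).sub i4
  have i6 := i5.const_mul (t^2)
  have i7 := i2.const_mul (2*t)
  refine ⟨(i1.sub i7).add i6, ?_⟩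
  rw [integral_add (by exact i1.sub i7) i6, integral_sub i1 i7, integral_const_mul, integral_const_mul,
    integral_sub (integrable_const _) i4, integral_const_mul 2 (fun g => ∑ i ∈ Finset.range k, zz k x g i * zz k x g (i+1)),
    integral_finsetSum _ fun l _ => int_coord_sq l,
    integral_finsetSum _ fun l _ => int_lin k x l,
    integral_finsetSum _ fun l _ => int_corr k x l]
  simp only [E_sq, integral_const, probReal_univ, one_smul]
  have e1 : ∑ i ∈ Finset.range (k+1), ∫ g, zz k x g i *
      (g (Fin.ofNat (k+2) i) - g (Fin.ofNat (k+2) (i+1))) ∂(γ (k+2))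
      = (k + 1 - s) * (2 / √π) := by
    rw [Finset.sum_congr rfl fun i hi => E_lin k x i (Finset.mem_range.1 hi), Finset.sum_ite,
      Finset.sum_const_zero, zero_add, Finset.sum_const, nsmul_eq_mul]
    have := Finset.card_filter_add_card_filter_not (s := Finset.range (k+1))
      (fun i => x i - x (i + 1) ≠ 0)
    rw [hcard, Finset.card_range] at this
    have h := congrArg (Nat.cast : ℕ → ℝ) this
    push_cast at h
    rw [← h]; ring
  have e2 : -(1/3) * ((k:ℝ) + 2 * s - 3) ≤
      ∑ i ∈ Finset.range k, ∫ g, zz k x g i * zz k x g (i+1) ∂(γ (k+2)) := by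
    have hc := (count (fun i => x i - x (i+1) ≠ 0) k).2.2.1
    rw [hcard] at hc
    have hc := hc (by omega) (by omega)
    have := Finset.sum_le_sum fun i hi => E_corr k x i (Finset.mem_range.1 hi)
    rw [← Finset.mul_sum] at this
    refine le_trans ?_ this
    linarith
  rw [e1]
  have := mul_le_mul_of_nonneg_left e2 (sq_nonneg t)
  simp
  nlinarith

end TVaux

/-- For `x ∈ ℝⁿ` with gradient support of size `s`, `1 ≤ s ≤ n-2`, and standard Gaussian `g`,
`inf_{t ≥ 0} E[dist²(g, t ∂‖·‖_TV(x))] ≤ n - 3(n-1-s)²/(π(2n+s-4))`, where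
`∂‖·‖_TV(x) = Ωᵀ ∂‖·‖₁(Ωx)` for the one-dimensional difference operator `Ω`. -/
theorem stmt13 (n s : ℕ) (hn : 3 ≤ n) (x : ℕ → ℝ)
    (ω : ℕ → ℕ → ℝ)
    (hω : ∀ i l, ω i l = if l = i then 1 else if l = i + 1 then -1 else 0)
    (hcard : ((Finset.range (n - 1)).filter (fun i => x i - x (i + 1) ≠ 0)).card = s)
    (hs1 : 1 ≤ s) (hs2 : s ≤ n - 2) :
    sInf {E : ℝ | ∃ t : ℝ, 0 ≤ t ∧
        E = ∫ g : Fin n → ℝ,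
          sInf {d : ℝ | ∃ z : ℕ → ℝ,
            (∀ i < n - 1,
              (x i - x (i + 1) ≠ 0 → z i = Real.sign (x i - x (i + 1))) ∧
              (x i - x (i + 1) = 0 → |z i| ≤ 1)) ∧
            d = ∑ l : Fin n,
              (g l - t * ∑ i ∈ Finset.range (n - 1), z i * ω i (l : ℕ)) ^ 2}
          ∂(Measure.pi fun _ => gaussianReal 0 1)}
      ≤ (n : ℝ) - 3 * ((n : ℝ) - 1 - s) ^ 2 / (π * (2 * (n : ℝ) + s - 4)) := by
  obtain ⟨k, rfl⟩ : ∃ k, n = k + 2 := ⟨n - 2, by omega⟩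
  simp only [show k + 2 - 1 = k + 1 by omega, show k + 2 - 2 = k by omega] at *
  set A : ℝ := 4 * (2 * k + s) / 3 with hA
  set N : ℝ := k + 1 - s with hN
  have hsR : (1:ℝ) ≤ s := by exact_mod_cast hs1
  have hskR : (s:ℝ) ≤ k := by exact_mod_cast hs2
  have hApos : 0 < A := by rw [hA]; linarith
  have hNpos : 0 < N := by rw [hN]; linarith
  set t : ℝ := N * (2 / √π) / A with ht
  have htpos : 0 ≤ t := by positivity
  have hbb : ∀ (t : ℝ) (g : Fin (k+2) → ℝ), 0 ≤ sInf {d : ℝ | ∃ z : ℕ → ℝ,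
            (∀ i < k + 1,
              (x i - x (i + 1) ≠ 0 → z i = Real.sign (x i - x (i + 1))) ∧
              (x i - x (i + 1) = 0 → |z i| ≤ 1)) ∧
            d = ∑ l : Fin (k+2),
              (g l - t * ∑ i ∈ Finset.range (k + 1), z i * ω i (l : ℕ)) ^ 2} := by
    intro t g
    refine Real.sInf_nonneg ?_
    rintro d ⟨z, -, rfl⟩
    exact Finset.sum_nonneg fun l _ => sq_nonneg _
  have hle : ∀ g : Fin (k+2) → ℝ, sInf {d : ℝ | ∃ z : ℕ → ℝ,
            (∀ i < k + 1,
              (x i - x (i + 1) ≠ 0 → z i = Real.sign (x i - x (i + 1))) ∧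
              (x i - x (i + 1) = 0 → |z i| ≤ 1)) ∧
            d = ∑ l : Fin (k+2),
              (g l - t * ∑ i ∈ Finset.range (k + 1), z i * ω i (l : ℕ)) ^ 2} ≤
      ((∑ l : Fin (k+2), g l ^ 2) - 2 * t * (∑ i ∈ Finset.range (k+1),
          TVaux.zz k x g i * (g (Fin.ofNat (k+2) i) - g (Fin.ofNat (k+2) (i+1))))
        + t ^ 2 * (2 * (k+1) - 2 * ∑ i ∈ Finset.range k,
          TVaux.zz k x g i * TVaux.zz k x g (i+1))) := by
    intro g
    refine le_trans (csInf_le ?_ ?_)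
      (TVaux.expand ω hω k t (TVaux.zz k x g) g (TVaux.abs_zz k x g))
    · refine ⟨0, ?_⟩
      rintro d ⟨z, -, rfl⟩
      exact Finset.sum_nonneg fun l _ => sq_nonneg _
    · refine ⟨TVaux.zz k x g, fun i _ => ⟨fun h => ?_, fun _ => TVaux.abs_zz k x g i⟩, rfl⟩
      exact TVaux.zz_pos h g
  obtain ⟨hI, hE⟩ := TVaux.main k s x hcard hs1 hs2 t
  have hint := integral_mono_of_nonneg (μ := TVaux.γ (k+2))
    (Filter.Eventually.of_forall (hbb t)) hI (Filter.Eventually.of_forall hle)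
  refine le_trans (csInf_le ?_ ⟨t, htpos, rfl⟩) (le_trans (le_trans hint hE) (le_of_eq ?_))
  · refine ⟨0, ?_⟩
    rintro E ⟨t, -, rfl⟩
    exact integral_nonneg (hbb t)
  · have hpi : √π ^ 2 = π := Real.sq_sqrt Real.pi_pos.le
    have hpi0 : √π ≠ 0 := by positivity
    have hA' : (2 * (k:ℝ) + s) ≠ 0 := by linarith
    have h1 : 2 * (((k + 2 : ℕ)) : ℝ) + s - 4 = 2 * k + s := by push_cast; ring
    have h2 : (((k + 2 : ℕ)) : ℝ) - 1 - s = N := by rw [hN]; push_cast; ring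
    rw [h1, h2, ht, hA, ← hN]
    clear_value N
    have h5 : (2 / √π) ^ 2 = 4 / π := by rw [div_pow, hpi]; norm_num
    have h6 : π ≠ 0 := Real.pi_ne_zero
    push_cast
    generalize 2 / √π = c at h5
    have h7 : c ^ 2 * π = 4 := by rw [h5]; field_simp
    field_simp
    linear_combination (-3 * N^2) * h7
end
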